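/- Let n ≥ 1 and let w be a permutation of [n]. If the Schubert polynomial S_w(x) equals Max_w(x), then w avoids the permutation patterns 1432 and 1423. -/

import Mathlib

open MvPolynomial

/-- Gale order: `C ≤ D` iff same cardinality and for each `k`, the `k`-th least element of `C`
is at most the `k`-th least element of `D`. -/
def GaleLE {n : ℕ} (C D : Finset (Fin n)) : Prop :=
  C.card = D.card ∧ ∀ (k : ℕ) (hC : k < C.card) (hD : k < D.card),
    (C.orderIsoOfFin rfl ⟨k, hC⟩ : Fin n) ≤ (D.orderIsoOfFin rfl ⟨k, hD⟩ : Fin n)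

/-- `C ≤ D` for diagrams: columnwise Gale order. -/
def DiagramLE {n : ℕ} (C D : Fin n → Finset (Fin n)) : Prop := ∀ j, GaleLE (C j) (D j)

/-- The Rothe diagram of a permutation `w` (0-indexed): column `j` consists of the rows `i`
with `w i > j` and `i < w⁻¹ j`. -/
def rothe {n : ℕ} (w : Equiv.Perm (Fin n)) (j : Fin n) : Finset (Fin n) :=
  Finset.univ.filter fun i => j < w i ∧ i < w.symm j

/-- The monomial `x^C = ∏_j ∏_{i ∈ C_j} x_i` of a diagram `C`. -/
noncomputable def xDiagram {n : ℕ} (C : Fin n → Finset (Fin n)) : MvPolynomial (Fin n) ℤ :=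
  ∏ j, ∏ i ∈ C j, X i

/- `Max_D(x) = ∑_{C ≤ D} x^C`, summed over all diagrams `C` with `C ≤ D`. -/
open scoped Classical in
noncomputable def MaxPoly {n : ℕ} (D : Fin n → Finset (Fin n)) : MvPolynomial (Fin n) ℤ :=
  ∑ C ∈ Finset.univ.filter (fun C : Fin n → Finset (Fin n) => DiagramLE C D), xDiagram C

/-- `S` is the family of Schubert polynomials: `S_{w₀} = x_1^{n-1} ⋯ x_{n-1}` for the longest
permutation `w₀` (i.e. `Fin.revPerm`), and whenever `w_i < w_{i+1}`,
`S_w = ∂_i S_{w s_i}`, expressed denominator-free as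
`(x_i - x_{i+1}) S_w = S_{w s_i} - s_i · S_{w s_i}`. -/
def IsSchubertFamily {n : ℕ} (S : Equiv.Perm (Fin n) → MvPolynomial (Fin n) ℤ) : Prop :=
  S Fin.revPerm = (∏ i : Fin n, X i ^ (n - 1 - (i : ℕ))) ∧
  ∀ (w : Equiv.Perm (Fin n)) (i j : Fin n), (i : ℕ) + 1 = (j : ℕ) → w i < w j →
    (X i - X j) * S w =
      S (w * Equiv.swap i j) - rename (Equiv.swap i j) (S (w * Equiv.swap i j))

/-- `w` contains the pattern `π`: there is a strictly increasing choice of positions on which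
`w` is order isomorphic to `π`. -/
def ContainsPattern {n m : ℕ} (w : Equiv.Perm (Fin n)) (π : Fin m → ℕ) : Prop :=
  ∃ f : Fin m ↪o Fin n, ∀ s t : Fin m, π s < π t ↔ w (f s) < w (f t)

/-- `w` avoids the pattern `π`. -/
def AvoidsPattern {n m : ℕ} (w : Equiv.Perm (Fin n)) (π : Fin m → ℕ) : Prop :=
  ¬ ContainsPattern w π

/-!
Among the pairs `a < b` with two later positions `k` such that `w a < w k < w b`, take a minimal
one. Then `w` increases on `[a, b]`, and its Lehmer code `c` has `c k = c a + 1` strictly inside the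
interval and `c b ≥ c a + 2`. The monomial to look at is `x^c * x_a / x_b`.

Its coefficient in `S_w` is exactly `b - a`. The colexicographically leading term of `S_w` is `x^c`,
and `S_w` is symmetric under exchanging two variables between whose positions `w` increases. Reading
`S_w = ∂_{b-1} S_{w s_{b-1}}` coefficientwise, these two facts leave `1` plus the corresponding
coefficient of `S_{w s_{b-1}}` for the interval `[a, b - 1]`, so the coefficient telescopes.

Its coefficient in `Max_w` is larger: for every `t` in `[a, b]`, moving a box from row `t` to row
`a` in one column of the Rothe diagram and a box from row `b` to row `t` in another gives a diagram
of this weight, and these `b - a + 1` diagrams are distinct.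
-/

open Finset Finsupp
open Equiv (Perm swap)

section Coeff

variable {σ R : Type*} [CommSemiring R]

theorem coeff_eq_zero_of_degreeOf_lt_apply {f : MvPolynomial σ R} {d : σ →₀ ℕ} {i : σ}
    (h : degreeOf i f < d i) : coeff d f = 0 :=
  MvPolynomial.notMem_support_iff.1 fun hd => (monomial_le_degreeOf i hd).not_gt h

variable [DecidableEq σ]

theorem coeff_rename_swap (i j : σ) (f : MvPolynomial σ R) (d : σ →₀ ℕ) :
    coeff d (rename (swap i j) f) = coeff (d.mapDomain (swap i j)) f := by
  rw [← coeff_rename_mapDomain _ (swap i j).injective f, ← mapDomain_comp,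
    ← Equiv.Perm.coe_mul, Equiv.swap_mul_self, Equiv.Perm.coe_one, mapDomain_id]

theorem coeff_mapDomain_swap_of_rename_eq {i j : σ} {f : MvPolynomial σ R}
    (h : rename (swap i j) f = f) (d : σ →₀ ℕ) :
    coeff (d.mapDomain (swap i j)) f = coeff d f := by
  rw [← coeff_rename_swap, h]

end Coeff

section DividedDifference

variable {σ R : Type*} [DecidableEq σ] [CommRing R]

/-- `f` is the divided difference `∂ g = (g - s · g) / (x_i - x_j)` of `g`, where `s` exchanges
`x_i` and `x_j`; the quotient is encoded by multiplying out. -/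
def IsDividedDifference (i j : σ) (g f : MvPolynomial σ R) : Prop :=
  (X i - X j) * f = g - rename (swap i j) g

namespace IsDividedDifference

variable {i j : σ} {f g : MvPolynomial σ R}

theorem coeff_X_mul_sub_coeff_X_mul (h : IsDividedDifference i j g f) (d : σ →₀ ℕ) :
    coeff d (X i * f) - coeff d (X j * f) = coeff d g - coeff (d.mapDomain (swap i j)) g := by
  rw [← coeff_rename_swap, ← coeff_sub, ← coeff_sub, ← sub_mul, h]

theorem coeff_sub_coeff (h : IsDividedDifference i j g f) {d e : σ →₀ ℕ}
    (hde : single i 1 + d = single j 1 + e) :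
    coeff d f - coeff e f =
      coeff (single i 1 + d) g - coeff ((single i 1 + d).mapDomain (swap i j)) g := by
  rw [← h.coeff_X_mul_sub_coeff_X_mul, coeff_X_mul, hde, coeff_X_mul]

theorem coeff_eq_coeff_of_degreeOf_le (h : IsDividedDifference i j g f) (hij : i ≠ j)
    {d : σ →₀ ℕ} (hf : degreeOf i f ≤ d i) (hg : degreeOf j g ≤ d i) :
    coeff d f = coeff (single i 1 + d) g := by
  have key := h.coeff_X_mul_sub_coeff_X_mul (single i 1 + d)
  have hXf : coeff (single i 1 + d) (X j * f) = 0 := by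
    apply coeff_eq_zero_of_degreeOf_lt_apply (i := i)
    rw [mul_comm, degreeOf_mul_X_of_ne f hij, Finsupp.add_apply, single_eq_same]
    omega
  have hswap : coeff ((single i 1 + d).mapDomain (swap i j)) g = 0 := by
    apply coeff_eq_zero_of_degreeOf_lt_apply (i := j)
    rw [mapDomain_equiv_apply, Equiv.symm_swap, Equiv.swap_apply_right, Finsupp.add_apply,
      single_eq_same]
    omega
  rwa [coeff_X_mul, hXf, hswap, sub_zero, sub_zero] at key

variable [IsDomain R]

theorem rename_swap_eq (h : IsDividedDifference i j g f) (hij : i ≠ j) :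
    rename (swap i j) f = f := by
  have hX : (X i - X j : MvPolynomial σ R) ≠ 0 := sub_ne_zero.2 fun hX => hij (X_injective hX)
  have hren := congrArg (rename (swap i j)) h
  rw [map_mul, map_sub, map_sub, rename_X, rename_X, Equiv.swap_apply_left,
    Equiv.swap_apply_right, rename_rename, ← Equiv.Perm.coe_mul, Equiv.swap_mul_self,
    Equiv.Perm.coe_one, rename_id_apply] at hren
  unfold IsDividedDifference at h
  exact mul_left_cancel₀ hX (by linear_combination -hren - h)

theorem degreeOf_le_of_ne (h : IsDividedDifference i j g f) (hij : i ≠ j) {k : σ} (hki : k ≠ i)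
    (hkj : k ≠ j) : degreeOf k f ≤ degreeOf k g := by
  rcases eq_or_ne f 0 with rfl | hf
  · simp
  have hX : (X i - X j : MvPolynomial σ R) ≠ 0 := sub_ne_zero.2 fun hX => hij (X_injective hX)
  have hren : degreeOf k (rename (swap i j) g) = degreeOf k g := by
    simpa [Equiv.swap_apply_of_ne_of_ne hki hkj] using
      degreeOf_rename_of_injective (p := g) (swap i j).injective k
  calc degreeOf k f ≤ degreeOf k ((X i - X j) * f) := by rw [degreeOf_mul_eq hX hf]; omega
    _ ≤ degreeOf k g := by
      rw [h]
      exact (degreeOf_sub_le _ _ _).trans (by rw [hren, max_self])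

theorem degreeOf_left_le (h : IsDividedDifference i j g f) (hij : i ≠ j) {m : ℕ}
    (hi : degreeOf i g ≤ m + 1) (hj : degreeOf j g ≤ m + 1) : degreeOf i f ≤ m := by
  rcases eq_or_ne f 0 with rfl | hf
  · simp
  have hXcoeff : coeff (single i 1) (X i - X j : MvPolynomial σ R) ≠ 0 := by
    simp [coeff_X, single_left_inj, hij.symm]
  have hXdeg : 1 ≤ degreeOf i (X i - X j : MvPolynomial σ R) := by
    simpa using monomial_le_degreeOf i (MvPolynomial.mem_support_iff.2 hXcoeff)
  have hren : degreeOf i (rename (swap i j) g) = degreeOf j g := by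
    simpa using degreeOf_rename_of_injective (p := g) (swap i j).injective j
  have hprod : degreeOf i ((X i - X j) * f) ≤ m + 1 := by
    rw [h]
    exact (degreeOf_sub_le _ _ _).trans (max_le hi (hren.trans_le hj))
  have hX : (X i - X j : MvPolynomial σ R) ≠ 0 := ne_zero_iff.2 ⟨_, hXcoeff⟩
  rw [degreeOf_mul_eq hX hf] at hprod
  omega

theorem degreeOf_right_eq (h : IsDividedDifference i j g f) (hij : i ≠ j) :
    degreeOf j f = degreeOf i f := by
  simpa [h.rename_swap_eq hij] using
    degreeOf_rename_of_injective (p := f) (swap i j).injective i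

end IsDividedDifference

end DividedDifference

section LehmerCode

variable {n : ℕ} {w : Perm (Fin n)} {i j : Fin n}

/-- The Lehmer code of `w`: its entry at `i` is the number of inversions of `w` whose left
position is `i`. It is a `Finsupp`, so that it serves as the exponent of a monomial. -/
noncomputable def lehmerCode (w : Perm (Fin n)) : Fin n →₀ ℕ :=
  equivFunOnFinite.symm fun i => #{k | i < k ∧ w k < w i}

theorem lehmerCode_apply (w : Perm (Fin n)) (i : Fin n) :
    lehmerCode w i = #{k | i < k ∧ w k < w i} := rfl

theorem lehmerCode_mul_swap (hij : (i : ℕ) + 1 = j) (hw : w i < w j) :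
    lehmerCode (w * swap i j) = single i 1 + (lehmerCode w).mapDomain (swap i j) := by
  have hne : i ≠ j := by rintro rfl; omega
  ext k
  have hreindex : lehmerCode (w * swap i j) k =
      #{l | k < swap i j l ∧ w l < w (swap i j k)} := by
    rw [lehmerCode_apply]
    exact card_equiv (swap i j) fun l => by rw [mem_filter_univ, mem_filter_univ]; simp
  rw [hreindex, Finsupp.add_apply, mapDomain_equiv_apply, Equiv.symm_swap, lehmerCode_apply]
  rcases eq_or_ne k i with rfl | hki
  · have hinsert : ({l | k < swap k j l ∧ w l < w j} : Finset (Fin n)) =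
        insert k ({l | j < l ∧ w l < w j} : Finset (Fin n)) := by
      ext l
      simp only [mem_filter_univ, mem_insert, Equiv.swap_apply_def]
      grind
    have hnotMem : k ∉ ({l | j < l ∧ w l < w j} : Finset (Fin n)) := by
      rw [mem_filter_univ]
      grind
    rw [Equiv.swap_apply_left, hinsert, card_insert_of_notMem hnotMem, single_eq_same,
      add_comm]
  rw [single_eq_of_ne hki, zero_add]
  congr 1
  ext l
  rw [mem_filter_univ, mem_filter_univ]
  simp only [Equiv.swap_apply_def]
  grind

theorem lehmerCode_apply_of_strictAntiOn (h : StrictAntiOn w (Set.Ici i)) :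
    lehmerCode w i = n - 1 - i := by
  rw [lehmerCode_apply, ← Fin.card_Ioi]
  congr 1
  ext k
  simpa using fun hk : i < k => h Set.self_mem_Ici hk.le hk

theorem lehmerCode_revPerm_apply (i : Fin n) : lehmerCode Fin.revPerm i = n - 1 - i :=
  lehmerCode_apply_of_strictAntiOn (Fin.rev_strictAnti.strictAntiOn _)

theorem eq_revPerm_of_strictAnti (h : StrictAnti w) : w = Fin.revPerm := by
  have hcomp : (w : Fin n → Fin n) ∘ Fin.rev = id :=
    ((h.comp Fin.rev_strictAnti).range_inj strictMono_id).1 (by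
      rw [Set.range_id, (w.surjective.comp Fin.rev_surjective).range_eq])
  ext k
  simpa using congrArg Fin.val (congrFun hcomp k.rev)

theorem exists_last_ascent (hw : w ≠ Fin.revPerm) :
    ∃ i j : Fin n, (i : ℕ) + 1 = j ∧ w i < w j ∧ StrictAntiOn w (Set.Ici j) := by
  have hne : ({i | ∃ l, i < l ∧ w i < w l} : Finset (Fin n)).Nonempty := by
    by_contra hempty
    refine hw (eq_revPerm_of_strictAnti fun i l hil => ?_)
    by_contra hle
    exact hempty ⟨i, by simpa using ⟨l, hil, (not_lt.1 hle).lt_of_ne (w.injective.ne hil.ne)⟩⟩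
  obtain ⟨i, hi, hmax⟩ := exists_max_image _ id hne
  obtain ⟨l, hil, hwil⟩ : ∃ l, i < l ∧ w i < w l := by simpa using hi
  have hanti : StrictAntiOn w (Set.Ioi i) := by
    intro k hk m _ hkm
    by_contra hle
    have := hmax k (by simpa using ⟨m, hkm, (not_lt.1 hle).lt_of_ne (w.injective.ne hkm.ne)⟩)
    exact this.not_gt hk
  let j : Fin n := ⟨i + 1, by omega⟩
  have hij : i < j := Fin.lt_def.2 (Nat.lt_succ_self _)
  have hjl : j ≤ l := Fin.le_def.2 hil
  exact ⟨i, j, rfl, hwil.trans_le (hanti.antitoneOn hij hil hjl),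
    hanti.mono fun k hk => hij.trans_le hk⟩

theorem last_ascent_induction {P : Perm (Fin n) → Prop} (hrev : P Fin.revPerm)
    (hstep : ∀ (w : Perm (Fin n)) (i j : Fin n), (i : ℕ) + 1 = j → w i < w j →
      StrictAntiOn w (Set.Ici j) → P (w * swap i j) → P w) (w : Perm (Fin n)) : P w := by
  induction w using
    WellFounded.induction (InvImage.wf (fun w : Perm (Fin n) => toColex ⇑w) wellFounded_lt) with
  | _ w ih =>
    rcases eq_or_ne w Fin.revPerm with rfl | hw
    · exact hrev
    obtain ⟨i, j, hij, hwij, hanti⟩ := exists_last_ascent hw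
    exact hstep w i j hij hwij hanti <| ih _ <|
      Pi.colex_asc (Fin.le_def.2 (by omega)) hwij

end LehmerCode

section LeadingTerm

theorem toColex_mapDomain_swap_lt {n : ℕ} {i j : Fin n} {c d : Fin n →₀ ℕ}
    (hij : (i : ℕ) + 1 = j) (hj : c j = d j) (h : toColex c < toColex d) :
    toColex (c.mapDomain (swap i j)) < toColex (d.mapDomain (swap i j)) := by
  obtain ⟨k, habove, hk : c k < d k⟩ := Colex.lt_iff.1 h
  replace habove : ∀ l, k < l → c l = d l := habove
  have hkj : k ≠ j := fun hkj => hk.ne (hkj ▸ hj)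
  refine Colex.lt_iff.2 ⟨swap i j k, fun l hl => ?_, ?_⟩
  · change c.mapDomain (swap i j) l = d.mapDomain (swap i j) l
    rw [mapDomain_equiv_apply, mapDomain_equiv_apply, Equiv.symm_swap]
    grind
  · simpa [mapDomain_equiv_apply] using hk

variable {n : ℕ} {R : Type*} [CommRing R] {w : Perm (Fin n)} {i j : Fin n}
  {f g : MvPolynomial (Fin n) R}

theorem IsDividedDifference.degreeOf_le_staircase [IsDomain R] (h : IsDividedDifference i j g f)
    (hij : (i : ℕ) + 1 = j) (hg : ∀ k : Fin n, degreeOf k g ≤ n - 1 - k) :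
    degreeOf i f ≤ n - 1 - j ∧ ∀ k : Fin n, degreeOf k f ≤ n - 1 - k := by
  have hne : i ≠ j := by rintro rfl; omega
  have hi : degreeOf i f ≤ n - 1 - j :=
    h.degreeOf_left_le hne ((hg i).trans (by omega)) ((hg j).trans (by omega))
  refine ⟨hi, fun k => ?_⟩
  rcases eq_or_ne k i with rfl | hki
  · omega
  rcases eq_or_ne k j with rfl | hkj
  · rwa [h.degreeOf_right_eq hne]
  · exact (h.degreeOf_le_of_ne hne hki hkj).trans (hg k)

/-- `f` has the degree in each variable that the staircase `(n-1, n-2, …, 0)` allows, and its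
leading term for the colexicographic (reverse lexicographic) order on exponents is the monomial of
the Lehmer code of `w`, with coefficient one. -/
structure HasLeadingCode (w : Perm (Fin n)) (f : MvPolynomial (Fin n) R) : Prop where
  degreeOf_le : ∀ k : Fin n, degreeOf k f ≤ n - 1 - k
  toColex_le : ∀ d ∈ f.support, toColex d ≤ toColex (lehmerCode w)
  coeff_eq_one : coeff (lehmerCode w) f = 1

namespace HasLeadingCode

theorem coeff_eq_zero_of_toColex_lt (h : HasLeadingCode w f) {d : Fin n →₀ ℕ}
    (hd : toColex (lehmerCode w) < toColex d) : coeff d f = 0 :=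
  MvPolynomial.notMem_support_iff.1 fun hmem => (h.toColex_le d hmem).not_gt hd

theorem coeff_eq_zero_of_lt_apply (h : HasLeadingCode w f) {d : Fin n →₀ ℕ} {k : Fin n}
    (hk : lehmerCode w k < d k) (habove : ∀ l, k < l → lehmerCode w l = d l) : coeff d f = 0 :=
  h.coeff_eq_zero_of_toColex_lt (Colex.lt_iff.2 ⟨k, habove, hk⟩)

theorem revPerm [Nontrivial R] : HasLeadingCode Fin.revPerm
    (∏ i : Fin n, X i ^ (n - 1 - (i : ℕ)) : MvPolynomial (Fin n) R) := by
  have hmonomial : (∏ i : Fin n, X i ^ (n - 1 - (i : ℕ)) : MvPolynomial (Fin n) R) =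
      monomial (lehmerCode Fin.revPerm) 1 := by
    rw [monomial_eq, C_1, one_mul, prod_fintype _ _ fun _ => pow_zero _]
    simp only [lehmerCode_revPerm_apply]
  rw [hmonomial]
  refine ⟨fun k => ?_, fun d hd => ?_, by simp⟩
  · rw [degreeOf_monomial_eq _ _ one_ne_zero, lehmerCode_revPerm_apply]
  · rw [mem_singleton.1 (support_monomial_subset hd)]

variable [IsDomain R]

theorem of_isDividedDifference (hij : (i : ℕ) + 1 = j) (hw : w i < w j)
    (hanti : StrictAntiOn w (Set.Ici j)) (h : IsDividedDifference i j g f)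
    (hg : HasLeadingCode (w * swap i j) g) : HasLeadingCode w f := by
  have hne : i ≠ j := by rintro rfl; omega
  have hcode (k : Fin n) (hk : j ≤ k) : lehmerCode w k = n - 1 - k :=
    lehmerCode_apply_of_strictAntiOn (hanti.mono (Set.Ici_subset_Ici.2 hk))
  obtain ⟨hdeg_i, hdeg⟩ := h.degreeOf_le_staircase hij hg.degreeOf_le
  have hcoeff (d : Fin n →₀ ℕ) (hd : d j = n - 1 - j) :
      coeff d f = coeff (single i 1 + d.mapDomain (swap i j)) g := by
    have hdi : d.mapDomain (swap i j) i = n - 1 - j := by simpa [mapDomain_equiv_apply] using hd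
    rw [← coeff_mapDomain_swap_of_rename_eq (h.rename_swap_eq hne) d]
    exact h.coeff_eq_coeff_of_degreeOf_le hne (hdi ▸ hdeg_i) (hdi ▸ hg.degreeOf_le j)
  refine ⟨hdeg, fun d hd => ?_, ?_⟩
  · by_contra! hlt
    obtain ⟨k, habove, hk : lehmerCode w k < d k⟩ := Colex.lt_iff.1 hlt
    have hkj : k < j := by
      by_contra! hjk
      exact (((monomial_le_degreeOf k hd).trans (hdeg k)).trans_eq (hcode k hjk).symm).not_gt hk
    have hdj : lehmerCode w j = d j := habove j hkj
    have hcoeff_ne := MvPolynomial.mem_support_iff.1 hd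
    rw [hcoeff d (hdj ▸ hcode j le_rfl)] at hcoeff_ne
    refine hcoeff_ne (hg.coeff_eq_zero_of_toColex_lt ?_)
    rw [lehmerCode_mul_swap hij hw, toColex_add, toColex_add]
    exact add_lt_add_right (toColex_mapDomain_swap_lt hij hdj hlt) _
  · rw [hcoeff _ (hcode j le_rfl), ← lehmerCode_mul_swap hij hw, hg.coeff_eq_one]

end HasLeadingCode

end LeadingTerm

section SchubertFamily

variable {n : ℕ} {S : Perm (Fin n) → MvPolynomial (Fin n) ℤ} {w : Perm (Fin n)} {a b i j : Fin n}

theorem exists_succ_eq_of_lt (hab : a < b) : ∃ i : Fin n, (i : ℕ) + 1 = b ∧ a ≤ i ∧ i < b :=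
  ⟨⟨b - 1, by omega⟩, Nat.sub_add_cancel (by omega), Fin.le_def.2 (Nat.le_sub_one_of_lt hab),
    Fin.lt_def.2 (Nat.sub_one_lt_of_lt hab)⟩

/-- The interval `[a, b]` of positions is a window of `w` if `w` increases on it and the Lehmer
code, constantly `c + 1` strictly inside it, has the value `c` at `a` and jumps to at least `c + 2`
at `b`. -/
structure IsCodeWindow (w : Perm (Fin n)) (a b : Fin n) : Prop where
  lt : a < b
  strictMonoOn : StrictMonoOn w (Set.Icc a b)
  apply_eq : ∀ k, a < k → k < b → lehmerCode w k = lehmerCode w a + 1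
  add_two_le : lehmerCode w a + 2 ≤ lehmerCode w b

namespace IsCodeWindow

theorem mul_swap (h : IsCodeWindow w a b) (hib : (i : ℕ) + 1 = b) (hai : a < i) :
    IsCodeWindow (w * swap i b) a i := by
  have hlt : i < b := Fin.lt_def.2 (by omega)
  have hwib : w i < w b := h.strictMonoOn ⟨hai.le, hlt.le⟩ ⟨h.lt.le, le_rfl⟩ hlt
  have hcode_of_lt (k : Fin n) (hk : k < i) :
      lehmerCode (w * swap i b) k = lehmerCode w k := by
    rw [lehmerCode_mul_swap hib hwib, Finsupp.add_apply, single_eq_of_ne hk.ne, zero_add,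
      mapDomain_equiv_apply, Equiv.symm_swap,
      Equiv.swap_apply_of_ne_of_ne hk.ne (hk.trans hlt).ne]
  have hcode_i : lehmerCode (w * swap i b) i = 1 + lehmerCode w b := by
    simp [lehmerCode_mul_swap hib hwib, mapDomain_equiv_apply]
  refine ⟨hai, fun k hk l hl hkl => ?_, fun k hak hki => ?_, ?_⟩
  · rw [Equiv.Perm.mul_apply, Equiv.Perm.mul_apply,
      Equiv.swap_apply_of_ne_of_ne (hkl.trans_le hl.2).ne ((hkl.trans_le hl.2).trans hlt).ne]
    rcases hl.2.eq_or_lt with rfl | hli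
    · rw [Equiv.swap_apply_left]
      exact h.strictMonoOn ⟨hk.1, hk.2.trans hlt.le⟩ ⟨h.lt.le, le_rfl⟩ (hkl.trans hlt)
    · rw [Equiv.swap_apply_of_ne_of_ne hli.ne (hli.trans hlt).ne]
      exact h.strictMonoOn ⟨hk.1, hk.2.trans hlt.le⟩ ⟨hl.1, hl.2.trans hlt.le⟩ hkl
  · rw [hcode_of_lt k hki, hcode_of_lt a hai, h.apply_eq k hak (hki.trans hlt)]
  · rw [hcode_of_lt a hai, hcode_i]
    exact h.add_two_le.trans (by omega)

theorem single_add_mapDomain_swap (h : IsCodeWindow w a b) (hai : a ≤ i) (hib : i < b) :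
    single i 1 + (lehmerCode w).mapDomain (swap a i) = single a 1 + lehmerCode w := by
  rcases hai.eq_or_lt with rfl | hai
  · simp [Equiv.swap_self]
  have hcode_i := h.apply_eq i hai hib
  ext k
  simp only [Finsupp.add_apply, mapDomain_equiv_apply, Equiv.symm_swap]
  rcases eq_or_ne k a with rfl | hka
  · simp [hai.ne, hcode_i, add_comm]
  rcases eq_or_ne k i with rfl | hki
  · simp [hai.ne', hcode_i, add_comm]
  · simp [hka, hki, Equiv.swap_apply_of_ne_of_ne]

end IsCodeWindow

namespace IsSchubertFamily

theorem isDividedDifference (hS : IsSchubertFamily S) (hij : (i : ℕ) + 1 = j) (hw : w i < w j) :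
    IsDividedDifference i j (S (w * swap i j)) (S w) :=
  hS.2 w i j hij hw

theorem hasLeadingCode (hS : IsSchubertFamily S) (w : Perm (Fin n)) : HasLeadingCode w (S w) :=
  last_ascent_induction (P := fun w => HasLeadingCode w (S w)) (hS.1 ▸ HasLeadingCode.revPerm)
    (fun _ _ _ hij hw hanti => .of_isDividedDifference hij hw hanti
      (hS.isDividedDifference hij hw)) w

theorem rename_swap_eq (hS : IsSchubertFamily S) (hab : a ≤ b) (hw : StrictMonoOn w (Set.Icc a b)) :
    rename (swap a b) (S w) = S w := by
  induction b using WellFoundedLT.induction with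
  | _ b ih =>
    rcases hab.eq_or_lt with rfl | hab
    · rw [Equiv.swap_self, Equiv.coe_refl, rename_id_apply]
    obtain ⟨i, hib, hai, hlt⟩ := exists_succ_eq_of_lt hab
    have hswap_ib : rename (swap i b) (S w) = S w :=
      (hS.isDividedDifference hib (hw ⟨hai, hlt.le⟩ ⟨hab.le, le_rfl⟩ hlt)).rename_swap_eq hlt.ne
    rcases hai.eq_or_lt with rfl | hai
    · exact hswap_ib
    have hswap_ai := ih i hlt hai.le (hw.mono (Set.Icc_subset_Icc_right hlt.le))
    rw [Equiv.swap_comm, ← Equiv.swap_mul_swap_mul_swap hai.ne hab.ne, Equiv.Perm.coe_mul,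
      Equiv.Perm.coe_mul, ← rename_rename, ← rename_rename, hswap_ib, hswap_ai, hswap_ib]

theorem coeff_eq_one_add_coeff (hS : IsSchubertFamily S) (h : IsCodeWindow w a b)
    (hib : (i : ℕ) + 1 = b) {t : Fin n →₀ ℕ} (ht : single b 1 + t = single a 1 + lehmerCode w) :
    coeff t (S w) = 1 + coeff ((single a 1 + lehmerCode w).mapDomain (swap i b))
      (S (w * swap i b)) := by
  have hlt : i < b := Fin.lt_def.2 (by omega)
  have hai : a ≤ i := Fin.le_def.2 (by have := Fin.lt_def.1 h.lt; omega)
  have hwib : w i < w b := h.strictMonoOn ⟨hai, hlt.le⟩ ⟨h.lt.le, le_rfl⟩ hlt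
  have hone : coeff ((lehmerCode w).mapDomain (swap a i)) (S w) = 1 := by
    rw [coeff_mapDomain_swap_of_rename_eq
      (hS.rename_swap_eq hai (h.strictMonoOn.mono (Set.Icc_subset_Icc_right hlt.le))),
      (hS.hasLeadingCode w).coeff_eq_one]
  have hzero : coeff (single a 1 + lehmerCode w) (S (w * swap i b)) = 0 := by
    refine (hS.hasLeadingCode _).coeff_eq_zero_of_lt_apply (k := b) ?_ fun l hl => ?_
    · have hcode_i : lehmerCode w i ≤ lehmerCode w a + 1 := by
        rcases hai.eq_or_lt with rfl | hai
        · omega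
        · exact (h.apply_eq i hai hlt).le
      have hcode_b := h.add_two_le
      have hcode_swap : lehmerCode (w * swap i b) b = lehmerCode w i := by
        simp [lehmerCode_mul_swap hib hwib, mapDomain_equiv_apply, hlt.ne']
      rw [hcode_swap, Finsupp.add_apply, single_eq_of_ne h.lt.ne']
      omega
    · simp [lehmerCode_mul_swap hib hwib, mapDomain_equiv_apply, hl.ne', (hlt.trans hl).ne',
        (h.lt.trans hl).ne', Equiv.swap_apply_of_ne_of_ne]
  have hswap := h.single_add_mapDomain_swap hai hlt
  have hdiff := (hS.isDividedDifference hib hwib).coeff_sub_coeff (hswap.trans ht.symm)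
  rw [hswap, hone, hzero] at hdiff
  linarith

theorem coeff_eq_sub (hS : IsSchubertFamily S) (h : IsCodeWindow w a b) {t : Fin n →₀ ℕ}
    (ht : single b 1 + t = single a 1 + lehmerCode w) :
    coeff t (S w) = (b : ℤ) - (a : ℤ) := by
  induction b using WellFoundedLT.induction generalizing w t with
  | _ b ih =>
    obtain ⟨i, hib, hai, hlt⟩ := exists_succ_eq_of_lt h.lt
    have hwib : w i < w b := h.strictMonoOn ⟨hai, hlt.le⟩ ⟨h.lt.le, le_rfl⟩ hlt
    rw [hS.coeff_eq_one_add_coeff h hib ht, mapDomain_add, mapDomain_single]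
    rcases hai.eq_or_lt with rfl | hai
    · rw [Equiv.swap_apply_left, (hS.hasLeadingCode _).coeff_eq_zero_of_lt_apply (k := b)]
      · omega
      · simp [lehmerCode_mul_swap hib hwib, hlt.ne']
      · intro l hl
        simp [lehmerCode_mul_swap hib hwib, hl.ne', (hlt.trans hl).ne']
    · rw [Equiv.swap_apply_of_ne_of_ne hai.ne h.lt.ne, ih i hlt (h.mul_swap hib hai)]
      · omega
      · rw [lehmerCode_mul_swap hib hwib, add_left_comm]

end IsSchubertFamily

end SchubertFamily

section GaleOrder

variable {n : ℕ} {C D : Finset (Fin n)}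

theorem GaleLE.refl (D : Finset (Fin n)) : GaleLE D D :=
  ⟨rfl, fun _ _ _ => le_rfl⟩

theorem orderIsoOfFin_le_iff_lt_card (D : Finset (Fin n)) (k : Fin #D) (x : Fin n) :
    (D.orderIsoOfFin rfl k : Fin n) ≤ x ↔ (k : ℕ) < #{d ∈ D | d ≤ x} := by
  have hcard : #{d ∈ D | d ≤ x} = #{l | D.orderEmbOfFin rfl l ≤ x} := by
    conv_lhs => rw [← D.map_orderEmbOfFin_univ rfl, filter_map, card_map]
    rfl
  rw [hcard, coe_orderIsoOfFin_apply]
  exact (Tuple.lt_card_le_iff_apply_le_of_monotone (D.orderEmbOfFin rfl).monotone).symm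

theorem galeLE_of_card_filter_le (hcard : #C = #D)
    (h : ∀ x, #{d ∈ D | d ≤ x} ≤ #{c ∈ C | c ≤ x}) : GaleLE C D := by
  refine ⟨hcard, fun k hC hD => ?_⟩
  rw [orderIsoOfFin_le_iff_lt_card]
  exact ((orderIsoOfFin_le_iff_lt_card D ⟨k, hD⟩ _).1 le_rfl).trans_le (h _)

theorem galeLE_map {e : Fin n ↪ Fin n} (he : ∀ d ∈ D, e d ≤ d) : GaleLE (D.map e) D := by
  refine galeLE_of_card_filter_le (card_map e) fun x => ?_
  rw [filter_map, card_map]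
  exact card_le_card fun d hd => by
    rw [mem_filter] at hd ⊢
    exact ⟨hd.1, (he d hd.1).trans hd.2⟩

end GaleOrder

section DiagramWeight

variable {n : ℕ} {w : Perm (Fin n)}

/-- The exponent of the monomial `∏ i ∈ s, x i` of a diagram column `s`. -/
noncomputable def columnWeight (s : Finset (Fin n)) : Fin n →₀ ℕ :=
  ∑ i ∈ s, single i 1

/-- The exponent of the monomial `x^C` of a diagram `C`. -/
noncomputable def diagramWeight (C : Fin n → Finset (Fin n)) : Fin n →₀ ℕ :=
  ∑ j, columnWeight (C j)

theorem xDiagram_eq_monomial (C : Fin n → Finset (Fin n)) :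
    xDiagram C = monomial (diagramWeight C) 1 := by
  simp only [xDiagram, diagramWeight, columnWeight, monomial_sum_one, X]

open scoped Classical in
theorem coeff_maxPoly (D : Fin n → Finset (Fin n)) (u : Fin n →₀ ℕ) :
    coeff u (MaxPoly D) = #{C | DiagramLE C D ∧ diagramWeight C = u} := by
  simp only [MaxPoly, coeff_sum, xDiagram_eq_monomial, coeff_monomial, sum_boole, filter_filter]

theorem diagramWeight_apply (C : Fin n → Finset (Fin n)) (i : Fin n) :
    diagramWeight C i = #{j | i ∈ C j} := by
  simp [diagramWeight, columnWeight, finsetSum_apply, single_apply]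

theorem diagramWeight_rothe (w : Perm (Fin n)) : diagramWeight (rothe w) = lehmerCode w := by
  ext i
  rw [diagramWeight_apply, lehmerCode_apply]
  refine card_equiv w.symm fun j => ?_
  rw [mem_filter_univ, mem_filter_univ, rothe, mem_filter_univ, Equiv.apply_symm_apply, and_comm]

theorem mem_rothe_apply {i k : Fin n} : i ∈ rothe w (w k) ↔ w k < w i ∧ i < k := by
  rw [rothe, mem_filter_univ, Equiv.symm_apply_apply]

theorem columnWeight_map_swap {s : Finset (Fin n)} {i j : Fin n} (h : i = j ∨ i ∉ s ∧ j ∈ s) :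
    single j 1 + columnWeight (s.map (swap i j).toEmbedding) = single i 1 + columnWeight s := by
  rcases h with rfl | ⟨hi, hj⟩
  · simp
  have herase : ∑ k ∈ s.erase j, single (swap i j k) 1 = ∑ k ∈ s.erase j, single k 1 :=
    sum_congr rfl fun k hk => by
      rw [Equiv.swap_apply_of_ne_of_ne (ne_of_mem_of_not_mem (mem_of_mem_erase hk) hi)
        (ne_of_mem_erase hk)]
  simp only [columnWeight, sum_map, Equiv.coe_toEmbedding]
  rw [← add_sum_erase s _ hj, ← add_sum_erase s (fun k => single k 1) hj, herase,
    Equiv.swap_apply_right, add_left_comm]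

theorem diagramWeight_update (C : Fin n → Finset (Fin n)) (j : Fin n) (s : Finset (Fin n)) :
    columnWeight (C j) + diagramWeight (Function.update C j s) =
      columnWeight s + diagramWeight C := by
  have hupdate : ∑ k ∈ univ.erase j, columnWeight (Function.update C j s k) =
      ∑ k ∈ univ.erase j, columnWeight (C k) :=
    sum_congr rfl fun k hk => by rw [Function.update_of_ne (ne_of_mem_erase hk)]
  unfold diagramWeight
  rw [← add_sum_erase univ _ (Finset.mem_univ j), hupdate, Function.update_self,
    ← add_sum_erase univ (fun k => columnWeight (C k)) (Finset.mem_univ j), add_left_comm]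

end DiagramWeight

section Exchange

variable {n : ℕ} {D : Fin n → Finset (Fin n)} {c d a b t : Fin n}

/-- The columns `c` and `d` of `D` allow exchanging boxes between the rows of `[a, b]`: in column
`c` exactly the row `a` of the interval is missing, in column `d` all rows but `b` are. -/
structure IsExchangePair (D : Fin n → Finset (Fin n)) (c d a b : Fin n) : Prop where
  ne : c ≠ d
  left_notMem : a ∉ D c
  mem : ∀ t, a < t → t ≤ b → t ∈ D c
  notMem : ∀ t, a ≤ t → t < b → t ∉ D d
  right_mem : b ∈ D d

/-- The diagram obtained from `D` by moving the box of row `t` in column `c` up to row `a` and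
the box of row `b` in column `d` up to row `t`. -/
def exchange (D : Fin n → Finset (Fin n)) (c d a b t : Fin n) : Fin n → Finset (Fin n) :=
  Function.update (Function.update D c ((D c).map (swap a t).toEmbedding)) d
    ((D d).map (swap t b).toEmbedding)

namespace IsExchangePair

theorem diagramLE_exchange (h : IsExchangePair D c d a b) (hat : a ≤ t) (htb : t ≤ b) :
    DiagramLE (exchange D c d a b t) D := by
  intro j
  rcases eq_or_ne j d with rfl | hjd
  · rw [exchange, Function.update_self]
    refine galeLE_map fun k hk => ?_
    have hnotMem := h.notMem t hat
    simp only [Equiv.coe_toEmbedding, Equiv.swap_apply_def]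
    grind
  rw [exchange, Function.update_of_ne hjd]
  rcases eq_or_ne j c with rfl | hjc
  · rw [Function.update_self]
    refine galeLE_map fun k hk => ?_
    have hnotMem := h.left_notMem
    simp only [Equiv.coe_toEmbedding, Equiv.swap_apply_def]
    grind
  · rw [Function.update_of_ne hjc]
    exact GaleLE.refl _

theorem diagramWeight_exchange (h : IsExchangePair D c d a b) (hat : a ≤ t) (htb : t ≤ b) :
    single b 1 + diagramWeight (exchange D c d a b t) = single a 1 + diagramWeight D := by
  have hc : single t 1 + columnWeight ((D c).map (swap a t).toEmbedding) =
      single a 1 + columnWeight (D c) :=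
    columnWeight_map_swap (hat.eq_or_lt.imp_right fun hlt => ⟨h.left_notMem, h.mem t hlt htb⟩)
  have hd : single b 1 + columnWeight ((D d).map (swap t b).toEmbedding) =
      single t 1 + columnWeight (D d) :=
    columnWeight_map_swap (htb.eq_or_lt.imp_right fun hlt => ⟨h.notMem t hat hlt, h.right_mem⟩)
  have hupdate_c := diagramWeight_update D c ((D c).map (swap a t).toEmbedding)
  have hupdate_d := diagramWeight_update (Function.update D c ((D c).map (swap a t).toEmbedding)) d
    ((D d).map (swap t b).toEmbedding)
  rw [Function.update_of_ne h.ne.symm] at hupdate_d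
  ext k
  have hc := DFunLike.congr_fun hc k
  have hd := DFunLike.congr_fun hd k
  have hupdate_c := DFunLike.congr_fun hupdate_c k
  have hupdate_d := DFunLike.congr_fun hupdate_d k
  simp only [Finsupp.add_apply, exchange] at hc hd hupdate_c hupdate_d ⊢
  omega

theorem exchange_injOn (h : IsExchangePair D c d a b) :
    Set.InjOn (exchange D c d a b) (Set.Icc a b) := by
  have heq_of_lt (s t : Fin n) (has : a ≤ s) (hsb : s < b)
      (hst : exchange D c d a b s = exchange D c d a b t) : s = t := by
    by_contra hne
    have hmem : s ∈ exchange D c d a b t d := by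
      rw [← hst, exchange, Function.update_self, mem_map_equiv, Equiv.symm_swap,
        Equiv.swap_apply_left]
      exact h.right_mem
    rw [exchange, Function.update_self, mem_map_equiv, Equiv.symm_swap,
      Equiv.swap_apply_of_ne_of_ne hne hsb.ne] at hmem
    exact h.notMem s has hsb hmem
  intro s hs t ht hst
  rcases hs.2.eq_or_lt with hsb | hsb
  · rcases ht.2.eq_or_lt with htb | htb
    · rw [hsb, htb]
    · exact (heq_of_lt t s ht.1 htb hst.symm).symm
  · exact heq_of_lt s t hs.1 hsb hst

open scoped Classical in
theorem sub_lt_coeff_maxPoly (h : IsExchangePair D c d a b) (hab : a ≤ b) {u : Fin n →₀ ℕ}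
    (hu : single b 1 + u = single a 1 + diagramWeight D) :
    (b : ℤ) - (a : ℤ) < coeff u (MaxPoly D) := by
  have hcard : #(Icc a b) ≤ #{C | DiagramLE C D ∧ diagramWeight C = u} := by
    refine card_le_card_of_injOn (exchange D c d a b) (fun t ht => ?_)
      (by simpa using h.exchange_injOn)
    obtain ⟨hat, htb⟩ := mem_Icc.1 ht
    rw [mem_coe, mem_filter_univ]
    exact ⟨h.diagramLE_exchange hat htb,
      add_left_cancel ((h.diagramWeight_exchange hat htb).trans hu.symm)⟩
  rw [Fin.card_Icc] at hcard
  rw [coeff_maxPoly]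
  omega

end IsExchangePair

end Exchange

section Patterns

variable {n : ℕ} {w : Perm (Fin n)} {a b c d k : Fin n}

/-- The positions `k` that complete `a < b` to an occurrence `w a < w k < w b` of the pattern
`132`. Two of them form an occurrence of `1432` or `1423`. -/
def completions132 (w : Perm (Fin n)) (a b : Fin n) : Finset (Fin n) :=
  {k | b < k ∧ w a < w k ∧ w k < w b}

theorem mem_completions132 :
    k ∈ completions132 w a b ↔ b < k ∧ w a < w k ∧ w k < w b := by
  rw [completions132, mem_filter_univ]

theorem lehmerCode_eq_add_card_completions132 (hab : a < b) (hw : StrictMonoOn w (Set.Icc a b)) :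
    lehmerCode w b = lehmerCode w a + #(completions132 w a b) := by
  have hinversions : ({k | b < k ∧ w k < w b} : Finset (Fin n)) =
      ({k | a < k ∧ w k < w a} : Finset (Fin n)) ∪ completions132 w a b := by
    ext k
    rw [mem_union, mem_completions132, mem_filter_univ, mem_filter_univ]
    have hwab : w a < w b := hw ⟨le_rfl, hab.le⟩ ⟨hab.le, le_rfl⟩ hab
    have hlt : a < k → k ≤ b → w a < w k := fun hak hkb =>
      hw ⟨le_rfl, hab.le⟩ ⟨hak.le, hkb⟩ hak
    have hne : a < k → w k ≠ w a := fun hak => w.injective.ne hak.ne'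
    grind
  have hdisjoint : Disjoint ({k | a < k ∧ w k < w a} : Finset (Fin n)) (completions132 w a b) :=
    disjoint_left.2 fun k hk hk' =>
      ((mem_filter_univ k).1 hk).2.not_gt (mem_completions132.1 hk').2.1
  rw [lehmerCode_apply, lehmerCode_apply, hinversions, card_union_of_disjoint hdisjoint]

/-- A pair `a < b` of positions with at least two completions to `132` patterns, while the pairs
obtained by moving one endpoint inside have at most one each. -/
structure IsTightPair (w : Perm (Fin n)) (a b : Fin n) : Prop where
  lt : a < b
  one_lt_card : 1 < #(completions132 w a b)
  card_le_one_left : ∀ k, a < k → k < b → #(completions132 w a k) ≤ 1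
  card_le_one_right : ∀ k, a < k → k < b → #(completions132 w k b) ≤ 1

theorem exists_isTightPair (hab : a < b) (h : 1 < #(completions132 w a b)) :
    ∃ a b, IsTightPair w a b := by
  obtain ⟨⟨a, b⟩, ⟨hab, hcard⟩, hmin⟩ := exists_minimalFor_of_wellFoundedLT
    (fun p : Fin n × Fin n => p.1 < p.2 ∧ 1 < #(completions132 w p.1 p.2))
    (fun p => (p.2 : ℕ) - p.1) ⟨(a, b), hab, h⟩
  refine ⟨a, b, hab, hcard, fun k hak hkb => ?_, fun k hak hkb => ?_⟩
  · by_contra! hk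
    have := hmin (j := (a, k)) ⟨hak, hk⟩
    dsimp only at this
    omega
  · by_contra! hk
    have := hmin (j := (k, b)) ⟨hkb, hk⟩
    dsimp only at this
    omega

namespace IsTightPair

theorem exists_completions (h : IsTightPair w a b) :
    ∃ c ∈ completions132 w a b, ∃ d ∈ completions132 w a b, w c < w d := by
  obtain ⟨c, hc, d, hd, hcd⟩ := Finset.one_lt_card.1 h.one_lt_card
  rcases (w.injective.ne hcd).lt_or_gt with hlt | hlt
  · exact ⟨c, hc, d, hd, hlt⟩
  · exact ⟨d, hd, c, hc, hlt⟩

theorem apply_mem_Ioo (h : IsTightPair w a b) (hc : c ∈ completions132 w a b)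
    (hd : d ∈ completions132 w a b) (hcd : w c < w d) (hak : a < k) (hkb : k < b) :
    w k ∈ Set.Ioo (w c) (w d) := by
  obtain ⟨hbc, hac, hcb⟩ := mem_completions132.1 hc
  obtain ⟨hbd, had, hdb⟩ := mem_completions132.1 hd
  have hne : c ≠ d := fun hcd' => hcd.ne (congrArg w hcd')
  constructor
  · by_contra! hle
    have hlt : w k < w c := hle.lt_of_ne (w.injective.ne (hkb.trans hbc).ne)
    exact (h.card_le_one_right k hak hkb).not_gt <| Finset.one_lt_card.2
      ⟨c, mem_completions132.2 ⟨hbc, hlt, hcb⟩, d,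
        mem_completions132.2 ⟨hbd, hlt.trans hcd, hdb⟩, hne⟩
  · by_contra! hle
    have hlt : w d < w k := hle.lt_of_ne (w.injective.ne (hkb.trans hbd).ne')
    exact (h.card_le_one_left k hak hkb).not_gt <| Finset.one_lt_card.2
      ⟨c, mem_completions132.2 ⟨hkb.trans hbc, hac, hcd.trans hlt⟩, d,
        mem_completions132.2 ⟨hkb.trans hbd, had, hlt⟩, hne⟩

theorem strictMonoOn (h : IsTightPair w a b) : StrictMonoOn w (Set.Icc a b) := by
  obtain ⟨c, hc, d, hd, hcd⟩ := h.exists_completions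
  have hbetween {k : Fin n} (hak : a < k) (hkb : k < b) := h.apply_mem_Ioo hc hd hcd hak hkb
  obtain ⟨hbc, hac, hcb⟩ := mem_completions132.1 hc
  obtain ⟨-, -, hdb⟩ := mem_completions132.1 hd
  rintro k ⟨hak, -⟩ l ⟨-, hlb⟩ hkl
  rcases hak.eq_or_lt with rfl | hak <;> rcases hlb.eq_or_lt with rfl | hlb
  · exact hac.trans hcb
  · exact hac.trans (hbetween hkl hlb).1
  · exact (hbetween hak hkl).2.trans hdb
  · -- Otherwise `l` and `c` would be two completions of the shorter pair `a < k`.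
    by_contra! hle
    have hlt : w l < w k := hle.lt_of_ne (w.injective.ne hkl.ne')
    have hcl := (hbetween (hak.trans hkl) hlb).1
    exact (h.card_le_one_left k hak (hkl.trans hlb)).not_gt <| Finset.one_lt_card.2
      ⟨l, mem_completions132.2 ⟨hkl, hac.trans hcl, hlt⟩, c,
        mem_completions132.2 ⟨(hkl.trans hlb).trans hbc, hac, hcl.trans hlt⟩,
        fun hlc => hcl.ne (congrArg w hlc.symm)⟩

theorem isCodeWindow (h : IsTightPair w a b) : IsCodeWindow w a b := by
  obtain ⟨c, hc, d, hd, hcd⟩ := h.exists_completions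
  obtain ⟨hbc, hac, -⟩ := mem_completions132.1 hc
  refine ⟨h.lt, h.strictMonoOn, fun k hak hkb => ?_, ?_⟩
  · have hck := (h.apply_mem_Ioo hc hd hcd hak hkb).1
    have hpos : 0 < #(completions132 w a k) :=
      card_pos.2 ⟨c, mem_completions132.2 ⟨hkb.trans hbc, hac, hck⟩⟩
    rw [lehmerCode_eq_add_card_completions132 hak
      (h.strictMonoOn.mono (Set.Icc_subset_Icc_right hkb.le)),
      (h.card_le_one_left k hak hkb).antisymm hpos]
  · rw [lehmerCode_eq_add_card_completions132 h.lt h.strictMonoOn]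
    exact Nat.add_le_add_left h.one_lt_card _

theorem exists_isExchangePair (h : IsTightPair w a b) :
    ∃ c d, IsExchangePair (rothe w) c d a b := by
  obtain ⟨c, hc, d, hd, hcd⟩ := h.exists_completions
  have hbetween {k : Fin n} (hak : a < k) (hkb : k < b) := h.apply_mem_Ioo hc hd hcd hak hkb
  obtain ⟨hbc, hac, hcb⟩ := mem_completions132.1 hc
  obtain ⟨hbd, had, hdb⟩ := mem_completions132.1 hd
  refine ⟨w c, w d, hcd.ne, fun ha => (mem_rothe_apply.1 ha).1.not_gt hac, fun t hat htb => ?_,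
    fun t hat htb ht => (mem_rothe_apply.1 ht).1.not_gt ?_, mem_rothe_apply.2 ⟨hdb, hbd⟩⟩
  · refine mem_rothe_apply.2 ⟨?_, htb.trans_lt hbc⟩
    rcases htb.eq_or_lt with rfl | htb
    · exact hcb
    · exact (hbetween hat htb).1
  · rcases hat.eq_or_lt with rfl | hat
    · exact had
    · exact (hbetween hat htb).2

end IsTightPair

theorem IsSchubertFamily.exists_coeff_lt_coeff_maxPoly
    {S : Perm (Fin n) → MvPolynomial (Fin n) ℤ} (hS : IsSchubertFamily S) (hab : a < b)
    (hcard : 1 < #(completions132 w a b)) :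
    ∃ u, coeff u (S w) < coeff u (MaxPoly (rothe w)) := by
  obtain ⟨a, b, htight⟩ := exists_isTightPair hab hcard
  obtain ⟨c, d, hexchange⟩ := htight.exists_isExchangePair
  have hwindow := htight.isCodeWindow
  have hle : single b 1 ≤ single a 1 + lehmerCode w := by
    rw [single_le_iff, Finsupp.add_apply]
    have := hwindow.add_two_le
    omega
  obtain ⟨u, hu⟩ := exists_add_of_le hle
  refine ⟨u, (hS.coeff_eq_sub hwindow hu.symm).trans_lt ?_⟩
  exact hexchange.sub_lt_coeff_maxPoly htight.lt.le (by rw [diagramWeight_rothe, hu])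

theorem ContainsPattern.exists_one_lt_card_completions132 {π : Fin 4 → ℕ}
    (h : ContainsPattern w π) (hπ : ∀ k, 1 < k → π 0 < π k ∧ π k < π 1) :
    ∃ a b, a < b ∧ 1 < #(completions132 w a b) := by
  obtain ⟨f, hf⟩ := h
  have hmem (k : Fin 4) (hk : 1 < k) : f k ∈ completions132 w (f 0) (f 1) :=
    mem_completions132.2 ⟨f.strictMono hk, (hf 0 k).1 (hπ k hk).1, (hf k 1).1 (hπ k hk).2⟩
  exact ⟨f 0, f 1, f.strictMono (by decide), Finset.one_lt_card.2
    ⟨f 2, hmem 2 (by decide), f 3, hmem 3 (by decide), f.injective.ne (by decide)⟩⟩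

end Patterns

/-- If the Schubert polynomial `S_w` equals the upper bound `Max_w`, then `w` avoids the
patterns 1432 and 1423. -/
theorem avoids_1432_1423_of_schubert_eq_max (n : ℕ) (hn : 1 ≤ n) (w : Equiv.Perm (Fin n))
    (S : Equiv.Perm (Fin n) → MvPolynomial (Fin n) ℤ) (hS : IsSchubertFamily S)
    (h : S w = MaxPoly (rothe w)) :
    AvoidsPattern w ![1, 4, 3, 2] ∧ AvoidsPattern w ![1, 4, 2, 3] := by
  have havoids (π : Fin 4 → ℕ) (hπ : ∀ k, 1 < k → π 0 < π k ∧ π k < π 1) :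
      AvoidsPattern w π := by
    intro hcontains
    obtain ⟨a, b, hab, hcard⟩ := hcontains.exists_one_lt_card_completions132 hπ
    obtain ⟨u, hu⟩ := hS.exists_coeff_lt_coeff_maxPoly hab hcard
    exact hu.ne (congrArg (coeff u) h)
  exact ⟨havoids _ (by decide), havoids _ (by decide)⟩
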